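/- Existence holds for the labeled nonlinear system: for every jointly measurable initial datum θ₀ : I × Ω → 𝕋 and every jointly measurable family B : I × Ω → C([0,T],ℝ) of continuous processes with B^x_0 = 0, there exists a solution θ of the nonlinear system for the labeled graphon W with initial datum θ₀ and driving processes B. -/

import Mathlib

open MeasureTheory ProbabilityTheory Real Set Filter Topology

noncomputable section

/-- The one-dimensional torus `𝕋 = ℝ/(2πℤ)`. -/
abbrev Torus : Type := AddCircle (2 * Real.pi)

instance : Fact (0 < 2 * Real.pi) := ⟨by positivity⟩

/-- The label space `I = [0,1]`. -/
abbrev I01 : Set ℝ := Set.Icc (0:ℝ) 1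

/-- The law at time `s` of the process `θ` under `P`. -/
def pathLaw {Ω : Type*} [MeasurableSpace Ω] (P : Measure Ω) (θ : Ω → ℝ → Torus) (s : ℝ) :
    Measure Torus := P.map (fun ω => θ ω s)

/-- The integrated drift
`∫₀ᵗ F(p_s) ds + ∫₀ᵗ ∫_I W(x,y) ( ∫_𝕋 Γ(p_s, u) μ^y_s(du) ) dy ds`. -/
def drift (F : Torus → ℝ) (Γ : Torus → Torus → ℝ) (W : ℝ → ℝ → ℝ)
    (μ : ℝ → ℝ → Measure Torus) (x : ℝ) (p : ℝ → Torus) (t : ℝ) : ℝ :=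
  (∫ s in Set.Icc 0 t, F (p s)) +
  ∫ s in Set.Icc 0 t, ∫ y in I01, W x y * ∫ u, Γ (p s) u ∂(μ y s)

/-- `θ : I × Ω → C([0,T],𝕋)` (jointly measurable, continuous in time) is a solution of the
labeled nonlinear system for the labeled graphon `W` with initial datum `θ0` and driving
processes `B`: writing `μ^y_s` for the law of `θ^y_s`, for a.e. `x ∈ I`, `P`-a.s., for all
`t ∈ [0,T]`,
`θ^x_t = θ^x_0 + π( ∫₀ᵗ F(θ^x_s) ds + ∫₀ᵗ ∫_I W(x,y) (∫_𝕋 Γ(θ^x_s,u) μ^y_s(du)) dy ds + B^x_t )`. -/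
structure IsLabeledSolution {Ω : Type*} [MeasurableSpace Ω] (T : ℝ) (P : Measure Ω)
    (F : Torus → ℝ) (Γ : Torus → Torus → ℝ) (W : ℝ → ℝ → ℝ)
    (θ0 : ℝ → Ω → Torus) (B : ℝ → Ω → ℝ → ℝ) (θ : ℝ → Ω → ℝ → Torus) : Prop where
  jointMeas : Measurable (fun p : ℝ × Ω => θ p.1 p.2)
  cont : ∀ x ω, ContinuousOn (θ x ω) (Set.Icc 0 T)
  sde : ∀ᵐ x ∂(volume.restrict I01), ∀ᵐ ω ∂P, ∀ t ∈ Set.Icc (0:ℝ) T,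
    θ x ω t = θ0 x ω +
      ((drift F Γ W (fun y s => pathLaw P (θ y) s) x (θ x ω) t + B x ω t : ℝ) : Torus)

/-- `F` is bounded and Lipschitz. -/
def BddLip (F : Torus → ℝ) : Prop :=
  (∃ K : NNReal, LipschitzWith K F) ∧ ∃ M : ℝ, ∀ a, |F a| ≤ M

/-- `Γ` is bounded and Lipschitz (jointly on `𝕋 × 𝕋`). -/
def BddLip2 (Γ : Torus → Torus → ℝ) : Prop :=
  (∃ K : NNReal, LipschitzWith K (fun p : Torus × Torus => Γ p.1 p.2)) ∧
    ∃ M : ℝ, ∀ a b, |Γ a b| ≤ M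

/-- A labeled graphon: a symmetric measurable function `I² → [0,1]`. -/
def IsGraphon (W : ℝ → ℝ → ℝ) : Prop :=
  Measurable (fun p : ℝ × ℝ => W p.1 p.2) ∧ (∀ x y, W x y ∈ Set.Icc (0:ℝ) 1) ∧
    ∀ x y, W x y = W y x

section helpers

variable {Ω : Type*} [MeasurableSpace Ω]

/-- The drift density along a family of paths. -/
def bdr (P : Measure Ω) (F : Torus → ℝ) (Γ : Torus → Torus → ℝ) (W : ℝ → ℝ → ℝ)
    (Θ : (ℝ × Ω) × ℝ → Torus) (q : (ℝ × Ω) × ℝ) : ℝ :=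
  F (Θ q) + ∫ y in I01, W q.1.1 y * ∫ ω', Γ (Θ q) (Θ ((y, ω'), q.2)) ∂P

/-- The Picard map. -/
def picard (P : Measure Ω) (F : Torus → ℝ) (Γ : Torus → Torus → ℝ) (W : ℝ → ℝ → ℝ)
    (θ0 : ℝ → Ω → Torus) (Bc : (ℝ × Ω) × ℝ → ℝ)
    (Θ : (ℝ × Ω) × ℝ → Torus) (q : (ℝ × Ω) × ℝ) : Torus :=
  θ0 q.1.1 q.1.2 +
    (((∫ s in Set.Icc 0 q.2, bdr P F Γ W Θ (q.1, s)) + Bc q : ℝ) : Torus)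

lemma torus_dist_le (c : Torus) (a b : ℝ) : dist (c + (a : Torus)) (c + (b : Torus)) ≤ |a - b| := by
  rw [dist_add_left, dist_eq_norm, ← AddCircle.coe_sub]
  exact QuotientAddGroup.norm_mk_le_norm

lemma inner_meas (P : Measure Ω) [IsProbabilityMeasure P] (Γ : Torus → Torus → ℝ)
    (hΓ : Measurable (fun p : Torus × Torus => Γ p.1 p.2))
    (Θ : (ℝ × Ω) × ℝ → Torus) (hΘ : Measurable Θ) :
    Measurable (fun r : ((ℝ × Ω) × ℝ) × ℝ => ∫ ω', Γ (Θ r.1) (Θ ((r.2, ω'), r.1.2)) ∂P) := by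
  have h : Measurable (fun z : (((ℝ × Ω) × ℝ) × ℝ) × Ω =>
      Γ (Θ z.1.1) (Θ ((z.1.2, z.2), z.1.1.2))) := by
    exact hΓ.comp (f := fun z : (((ℝ × Ω) × ℝ) × ℝ) × Ω =>
      (Θ z.1.1, Θ ((z.1.2, z.2), z.1.1.2))) (by fun_prop)
  exact (h.stronglyMeasurable.integral_prod_right (ν := P)).measurable

lemma second_meas (P : Measure Ω) [IsProbabilityMeasure P] (Γ : Torus → Torus → ℝ)
    (hΓ : Measurable (fun p : Torus × Torus => Γ p.1 p.2))
    (W : ℝ → ℝ → ℝ) (hW : Measurable (fun p : ℝ × ℝ => W p.1 p.2))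
    (Θ : (ℝ × Ω) × ℝ → Torus) (hΘ : Measurable Θ) :
    Measurable (fun q : (ℝ × Ω) × ℝ =>
      ∫ y in I01, W q.1.1 y * ∫ ω', Γ (Θ q) (Θ ((y, ω'), q.2)) ∂P) := by
  have h1 : Measurable (fun r : ((ℝ × Ω) × ℝ) × ℝ => W r.1.1.1 r.2) :=
    hW.comp (f := fun r : ((ℝ × Ω) × ℝ) × ℝ => (r.1.1.1, r.2)) (by fun_prop)
  have h2 := h1.mul (inner_meas P Γ hΓ Θ hΘ)
  exact (h2.stronglyMeasurable.integral_prod_right (ν := volume.restrict I01)).measurable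

lemma bdr_meas (P : Measure Ω) [IsProbabilityMeasure P] (F : Torus → ℝ) (hF : Measurable F)
    (Γ : Torus → Torus → ℝ) (hΓ : Measurable (fun p : Torus × Torus => Γ p.1 p.2))
    (W : ℝ → ℝ → ℝ) (hW : Measurable (fun p : ℝ × ℝ => W p.1 p.2))
    (Θ : (ℝ × Ω) × ℝ → Torus) (hΘ : Measurable Θ) :
    Measurable (bdr P F Γ W Θ) :=
  (hF.comp hΘ).add (second_meas P Γ hΓ W hW Θ hΘ)

lemma picard_meas (P : Measure Ω) [IsProbabilityMeasure P] (F : Torus → ℝ) (hF : Measurable F)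
    (Γ : Torus → Torus → ℝ) (hΓ : Measurable (fun p : Torus × Torus => Γ p.1 p.2))
    (W : ℝ → ℝ → ℝ) (hW : Measurable (fun p : ℝ × ℝ => W p.1 p.2))
    (θ0 : ℝ → Ω → Torus) (hθ0 : Measurable (fun p : ℝ × Ω => θ0 p.1 p.2))
    (Bc : (ℝ × Ω) × ℝ → ℝ) (hBc : Measurable Bc)
    (Θ : (ℝ × Ω) × ℝ → Torus) (hΘ : Measurable Θ) :
    Measurable (picard P F Γ W θ0 Bc Θ) := by
  have hb := bdr_meas P F hF Γ hΓ W hW Θ hΘ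
  have hset : MeasurableSet {r : ((ℝ × Ω) × ℝ) × ℝ | 0 ≤ r.2 ∧ r.2 ≤ r.1.2} :=
    (measurableSet_le measurable_const measurable_snd).inter
      (measurableSet_le measurable_snd (measurable_snd.comp measurable_fst))
  have h1 : Measurable (fun r : ((ℝ × Ω) × ℝ) × ℝ => bdr P F Γ W Θ (r.1.1, r.2)) := by
    fun_prop
  have h2 := (h1.indicator hset).stronglyMeasurable.integral_prod_right' (ν := volume)
  have h3 : Measurable (fun q : (ℝ × Ω) × ℝ =>
      ∫ s in Set.Icc 0 q.2, bdr P F Γ W Θ (q.1, s)) := by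
    convert h2.measurable using 2 with q
    rw [← integral_indicator measurableSet_Icc]
    congr 1
  have h4 : Measurable (fun q : (ℝ × Ω) × ℝ => θ0 q.1.1 q.1.2) := hθ0.comp measurable_fst
  have h5 : Measurable (fun a : ℝ => (a : Torus)) := (AddCircle.continuous_mk' _).measurable
  exact h4.add (h5.comp (h3.add hBc))

lemma second_bound (P : Measure Ω) [IsProbabilityMeasure P]
    (Γ : Torus → Torus → ℝ) (W : ℝ → ℝ → ℝ) (hW1 : ∀ x y, W x y ∈ Set.Icc (0:ℝ) 1)
    (M : ℝ) (hM : ∀ a b, |Γ a b| ≤ M)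
    (Θ : (ℝ × Ω) × ℝ → Torus) (q : (ℝ × Ω) × ℝ) :
    |∫ y in I01, W q.1.1 y * ∫ ω', Γ (Θ q) (Θ ((y, ω'), q.2)) ∂P| ≤ M := by
  have hM0 : 0 ≤ M := (abs_nonneg _).trans (hM 0 0)
  have h := norm_setIntegral_le_of_norm_le_const (μ := volume) (s := I01) (C := M)
    (f := fun y => W q.1.1 y * ∫ ω', Γ (Θ q) (Θ ((y, ω'), q.2)) ∂P) (by simp) (by
      intro y _
      have h1 : ‖∫ ω', Γ (Θ q) (Θ ((y, ω'), q.2)) ∂P‖ ≤ M := by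
        have := norm_integral_le_of_norm_le_const (μ := P) (C := M)
          (f := fun ω' => Γ (Θ q) (Θ ((y, ω'), q.2))) (Eventually.of_forall fun ω' => hM _ _)
        simpa using this
      rw [norm_mul, Real.norm_eq_abs, abs_of_nonneg (hW1 _ _).1]
      calc _ ≤ 1 * M := mul_le_mul (hW1 _ _).2 h1 (norm_nonneg _) zero_le_one
        _ = M := one_mul M)
  simpa using h

lemma bdr_lip (P : Measure Ω) [IsProbabilityMeasure P] (F : Torus → ℝ) 
    (Γ : Torus → Torus → ℝ) (hΓ : Measurable (fun p : Torus × Torus => Γ p.1 p.2))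
    (W : ℝ → ℝ → ℝ) (hW : Measurable (fun p : ℝ × ℝ => W p.1 p.2))
    (hW1 : ∀ x y, W x y ∈ Set.Icc (0:ℝ) 1)
    (KF KG : NNReal) (hKF : LipschitzWith KF F)
    (hKG : LipschitzWith KG (fun p : Torus × Torus => Γ p.1 p.2))
    (M : ℝ) (hM : ∀ a b, |Γ a b| ≤ M)
    (Θ Θ' : (ℝ × Ω) × ℝ → Torus) (hΘ : Measurable Θ) (hΘ' : Measurable Θ')
    (s δ : ℝ) (hd : ∀ p, dist (Θ (p, s)) (Θ' (p, s)) ≤ δ) (p : ℝ × Ω) :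
    |bdr P F Γ W Θ (p, s) - bdr P F Γ W Θ' (p, s)| ≤ (KF + KG) * δ := by
  have hδ : 0 ≤ δ := dist_nonneg.trans (hd p)
  have hM0 : 0 ≤ M := (abs_nonneg _).trans (hM 0 0)
  have hin : ∀ (Θ : (ℝ × Ω) × ℝ → Torus), Measurable Θ → ∀ y,
      Integrable (fun ω' => Γ (Θ (p, s)) (Θ ((y, ω'), s))) P := by
    intro Θ hΘ y
    refine Integrable.of_bound (C := M) ?_ (Eventually.of_forall fun ω' => hM _ _)
    exact (hΓ.comp (f := fun ω' => (Θ (p, s), Θ ((y, ω'), s)))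
      (by fun_prop)).aestronglyMeasurable
  have hbd : ∀ (Θ : (ℝ × Ω) × ℝ → Torus) y,
      ‖W p.1 y * ∫ ω', Γ (Θ (p, s)) (Θ ((y, ω'), s)) ∂P‖ ≤ M := by
    intro Θ y
    have h1 : ‖∫ ω', Γ (Θ (p, s)) (Θ ((y, ω'), s)) ∂P‖ ≤ M := by
      have := norm_integral_le_of_norm_le_const (μ := P) (C := M)
        (f := fun ω' => Γ (Θ (p, s)) (Θ ((y, ω'), s))) (Eventually.of_forall fun ω' => hM _ _)
      simpa using this
    rw [norm_mul, Real.norm_eq_abs, abs_of_nonneg (hW1 _ _).1]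
    calc _ ≤ 1 * M := mul_le_mul (hW1 _ _).2 h1 (norm_nonneg _) zero_le_one
      _ = M := one_mul M
  have hout : ∀ (Θ : (ℝ × Ω) × ℝ → Torus), Measurable Θ →
      Integrable (fun y => W p.1 y * ∫ ω', Γ (Θ (p, s)) (Θ ((y, ω'), s)) ∂P)
        (volume.restrict I01) := by
    intro Θ hΘ
    refine Integrable.of_bound (C := M) ?_ (Eventually.of_forall fun y => hbd Θ y)
    have h1 : Measurable (fun y => W p.1 y) := hW.comp (f := fun y => (p.1, y)) (by fun_prop)
    have h2 : Measurable (fun y => ∫ ω', Γ (Θ (p, s)) (Θ ((y, ω'), s)) ∂P) :=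
      (inner_meas P Γ hΓ Θ hΘ).comp (g := fun r : ((ℝ × Ω) × ℝ) × ℝ =>
        ∫ ω', Γ (Θ r.1) (Θ ((r.2, ω'), r.1.2)) ∂P) (f := fun y => ((p, s), y)) (by fun_prop)
    exact (h1.mul h2).aestronglyMeasurable
  have hFd : |F (Θ (p, s)) - F (Θ' (p, s))| ≤ KF * δ := by
    rw [← Real.dist_eq]
    exact (hKF.dist_le_mul _ _).trans (mul_le_mul_of_nonneg_left (hd p) KF.2)
  have hsec : |(∫ y in I01, W p.1 y * ∫ ω', Γ (Θ (p, s)) (Θ ((y, ω'), s)) ∂P) -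
      ∫ y in I01, W p.1 y * ∫ ω', Γ (Θ' (p, s)) (Θ' ((y, ω'), s)) ∂P| ≤ KG * δ := by
    rw [← integral_sub (hout Θ hΘ) (hout Θ' hΘ')]
    have h := norm_setIntegral_le_of_norm_le_const (μ := volume) (s := I01) (C := KG * δ)
      (f := fun y => W p.1 y * (∫ ω', Γ (Θ (p, s)) (Θ ((y, ω'), s)) ∂P) -
        W p.1 y * ∫ ω', Γ (Θ' (p, s)) (Θ' ((y, ω'), s)) ∂P) (by simp) (by
        intro y _
        rw [← mul_sub, ← integral_sub (hin Θ hΘ y) (hin Θ' hΘ' y)]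
        have h1 : ‖∫ ω', (Γ (Θ (p, s)) (Θ ((y, ω'), s)) -
            Γ (Θ' (p, s)) (Θ' ((y, ω'), s))) ∂P‖ ≤ KG * δ := by
          have := norm_integral_le_of_norm_le_const (μ := P) (C := KG * δ)
            (f := fun ω' => Γ (Θ (p, s)) (Θ ((y, ω'), s)) -
              Γ (Θ' (p, s)) (Θ' ((y, ω'), s))) (Eventually.of_forall fun ω' => by
                rw [← dist_eq_norm]
                refine (hKG.dist_le_mul (Θ (p, s), Θ ((y, ω'), s))
                  (Θ' (p, s), Θ' ((y, ω'), s))).trans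
                  (mul_le_mul_of_nonneg_left ?_ KG.2)
                exact max_le (hd p) (hd (y, ω')))
          simpa using this
        rw [norm_mul, Real.norm_eq_abs, abs_of_nonneg (hW1 _ _).1]
        calc _ ≤ 1 * (KG * δ) := mul_le_mul (hW1 _ _).2 h1 (norm_nonneg _) zero_le_one
          _ = KG * δ := one_mul _)
    simpa using h
  have e : bdr P F Γ W Θ (p, s) - bdr P F Γ W Θ' (p, s) =
      (F (Θ (p, s)) - F (Θ' (p, s))) +
      ((∫ y in I01, W p.1 y * ∫ ω', Γ (Θ (p, s)) (Θ ((y, ω'), s)) ∂P) -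
      ∫ y in I01, W p.1 y * ∫ ω', Γ (Θ' (p, s)) (Θ' ((y, ω'), s)) ∂P) := by
    simp only [bdr]; ring
  rw [e]
  refine (abs_add_le _ _).trans ?_
  linarith

lemma bdr_integrable (P : Measure Ω) [IsProbabilityMeasure P] (F : Torus → ℝ) (hF : Measurable F)
    (Γ : Torus → Torus → ℝ) (hΓ : Measurable (fun p : Torus × Torus => Γ p.1 p.2))
    (W : ℝ → ℝ → ℝ) (hW : Measurable (fun p : ℝ × ℝ => W p.1 p.2))
    (hW1 : ∀ x y, W x y ∈ Set.Icc (0:ℝ) 1)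
    (M : ℝ) (hM : ∀ a b, |Γ a b| ≤ M) (MF : ℝ) (hMF : ∀ a, |F a| ≤ MF)
    (Θ : (ℝ × Ω) × ℝ → Torus) (hΘ : Measurable Θ) (p : ℝ × Ω) (t : ℝ) :
    IntegrableOn (fun s => F (Θ (p, s))) (Set.Icc 0 t) ∧
    IntegrableOn (fun s => ∫ y in I01, W p.1 y * ∫ ω', Γ (Θ (p, s)) (Θ ((y, ω'), s)) ∂P)
      (Set.Icc 0 t) := by
  constructor
  · refine Integrable.of_bound (C := MF) ?_ (Eventually.of_forall fun s => hMF _)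
    exact (hF.comp (hΘ.comp measurable_prodMk_left)).aestronglyMeasurable
  · refine Integrable.of_bound (C := M) ?_
      (Eventually.of_forall fun s => second_bound P Γ W hW1 M hM Θ (p, s))
    exact ((second_meas P Γ hΓ W hW Θ hΘ).comp
      (measurable_prodMk_left (x := p))).aestronglyMeasurable

lemma picard_lip (P : Measure Ω) [IsProbabilityMeasure P] (F : Torus → ℝ) (hF : Measurable F)
    (Γ : Torus → Torus → ℝ) (hΓ : Measurable (fun p : Torus × Torus => Γ p.1 p.2))
    (W : ℝ → ℝ → ℝ) (hW : Measurable (fun p : ℝ × ℝ => W p.1 p.2))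
    (hW1 : ∀ x y, W x y ∈ Set.Icc (0:ℝ) 1)
    (KF KG : NNReal) (hKF : LipschitzWith KF F)
    (hKG : LipschitzWith KG (fun p : Torus × Torus => Γ p.1 p.2))
    (M : ℝ) (hM : ∀ a b, |Γ a b| ≤ M) (MF : ℝ) (hMF : ∀ a, |F a| ≤ MF)
    (θ0 : ℝ → Ω → Torus) (Bc : (ℝ × Ω) × ℝ → ℝ)
    (Θ Θ' : (ℝ × Ω) × ℝ → Torus) (hΘ : Measurable Θ) (hΘ' : Measurable Θ')
    (L : ℝ) (hL : L = KF + KG + 1) (D : ℝ) (hD : 0 ≤ D)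
    (hd : ∀ p s, dist (Θ (p, s)) (Θ' (p, s)) ≤ D * Real.exp (2 * L * |s|))
    (p : ℝ × Ω) (t : ℝ) :
    dist (picard P F Γ W θ0 Bc Θ (p, t)) (picard P F Γ W θ0 Bc Θ' (p, t)) ≤
      D / 2 * Real.exp (2 * L * |t|) := by
  have hLpos : 0 < L := by rw [hL]; positivity
  have hi : ∀ Θ : (ℝ × Ω) × ℝ → Torus, Measurable Θ →
      IntegrableOn (fun s => bdr P F Γ W Θ (p, s)) (Set.Icc 0 t) := by
    intro Θ hΘ
    have := bdr_integrable P F hF Γ hΓ W hW hW1 M hM MF hMF Θ hΘ p t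
    exact this.1.add this.2
  refine (torus_dist_le _ _ _).trans ?_
  simp only [add_sub_add_right_eq_sub]
  rw [← integral_sub (hi Θ hΘ) (hi Θ' hΘ')]
  rcases lt_or_ge t 0 with ht | ht
  · rw [Set.Icc_eq_empty (not_le.2 ht)]
    simp only [Measure.restrict_empty, integral_zero_measure, abs_zero]
    positivity
  · have hcont : Continuous (fun s : ℝ => L * D * Real.exp (2 * L * s)) := by fun_prop
    have h1 : ‖∫ s in Set.Icc 0 t, (bdr P F Γ W Θ (p, s) - bdr P F Γ W Θ' (p, s))‖ ≤
        ∫ s in Set.Icc 0 t, L * D * Real.exp (2 * L * s) := by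
      refine norm_integral_le_of_norm_le (hcont.integrableOn_Icc) ?_
      filter_upwards [ae_restrict_mem measurableSet_Icc] with s hs
      have := bdr_lip P F Γ hΓ W hW hW1 KF KG hKF hKG M hM Θ Θ' hΘ hΘ' s _
        (fun p => hd p s) p
      rw [abs_of_nonneg hs.1] at this
      refine this.trans ?_
      have h3 : 0 ≤ D * Real.exp (2 * L * s) := by positivity
      rw [mul_assoc L D]
      refine mul_le_mul_of_nonneg_right ?_ h3
      linarith
    refine h1.trans ?_
    rw [integral_Icc_eq_integral_Ioc, ← intervalIntegral.integral_of_le ht]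
    have hder : ∀ s ∈ Set.uIcc 0 t, HasDerivAt (fun s => D / 2 * Real.exp (2 * L * s))
        (L * D * Real.exp (2 * L * s)) s := by
      intro s _
      have := (((hasDerivAt_id s).const_mul (2 * L)).exp).const_mul (D / 2)
      refine this.congr_deriv ?_
      simp only [id, mul_one]
      ring
    rw [intervalIntegral.integral_eq_sub_of_hasDerivAt hder (hcont.intervalIntegrable _ _),
      abs_of_nonneg ht]
    have : 0 ≤ D / 2 * Real.exp (2 * L * 0) := by positivity
    linarith

end helpers

/-- existence for the labeled nonlinear system: for every jointly
measurable initial datum `θ0 : I × Ω → 𝕋` and every jointly measurable family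
`B : I × Ω → C([0,T],ℝ)` of continuous processes with `B^x_0 = 0`, there exists a solution
`θ` of the nonlinear system for the labeled graphon `W` with initial datum `θ0` and driving
processes `B`. -/
theorem labeled_nonlinear_system_existence
    {Ω : Type*} [MeasurableSpace Ω] (T : ℝ) (hT : 0 < T)
    (P : Measure Ω) [IsProbabilityMeasure P]
    (F : Torus → ℝ) (Γ : Torus → Torus → ℝ) (hF : BddLip F) (hΓ : BddLip2 Γ)
    (W : ℝ → ℝ → ℝ) (hW : IsGraphon W)
    (θ0 : ℝ → Ω → Torus) (hθ0 : Measurable (fun p : ℝ × Ω => θ0 p.1 p.2))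
    (B : ℝ → Ω → ℝ → ℝ) (hBmeas : Measurable (fun p : ℝ × Ω => B p.1 p.2))
    (hB0 : ∀ x ω, B x ω 0 = 0) (hBcont : ∀ x ω, ContinuousOn (B x ω) (Set.Icc 0 T)) :
    ∃ θ : ℝ → Ω → ℝ → Torus, IsLabeledSolution T P F Γ W θ0 B θ := by
  obtain ⟨⟨KF, hKF⟩, MF, hMF⟩ := hF
  obtain ⟨⟨KG, hKG⟩, M, hM⟩ := hΓ
  obtain ⟨hWm, hW1, -⟩ := hW
  have hFm : Measurable F := hKF.continuous.measurable
  have hGm : Measurable (fun p : Torus × Torus => Γ p.1 p.2) := hKG.continuous.measurable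
  have hclamp : ∀ s : ℝ, max 0 (min s T) ∈ Set.Icc (0:ℝ) T := fun s =>
    ⟨le_max_left _ _, max_le hT.le (min_le_right _ _)⟩
  let Bc : (ℝ × Ω) × ℝ → ℝ := fun q => B q.1.1 q.1.2 (max 0 (min q.2 T))
  have hBcc : ∀ p : ℝ × Ω, Continuous fun s => Bc (p, s) := fun p =>
    (hBcont p.1 p.2).comp_continuous (by fun_prop) hclamp
  have hBc : Measurable Bc := by
    have h := measurable_uncurry_of_continuous_of_measurable
      (u := fun (s : ℝ) (p : ℝ × Ω) => Bc (p, s)) hBcc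
      (fun s => (measurable_pi_apply (max 0 (min s T))).comp hBmeas)
    exact h.comp measurable_swap
  set Φ := picard P F Γ W θ0 Bc with hΦ
  let Z : ℕ → (ℝ × Ω) × ℝ → Torus := fun n => Φ^[n] (fun _ => 0)
  have hZs : ∀ n, Z (n + 1) = Φ (Z n) := fun n => Function.iterate_succ_apply' _ _ _
  have hZm : ∀ n, Measurable (Z n) := by
    intro n
    induction n with
    | zero => exact measurable_const
    | succ n ih =>
      rw [hZs]
      exact picard_meas P F hFm Γ hGm W hWm θ0 hθ0 Bc hBc _ ih
  set L : ℝ := KF + KG + 1 with hL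
  have hLpos : 0 < L := by positivity
  have hlip := fun Θ Θ' hΘ hΘ' D hD hd p t => picard_lip P F hFm Γ hGm W hWm hW1 KF KG hKF hKG
    M hM MF hMF θ0 Bc Θ Θ' hΘ hΘ' L hL D hD hd p t
  have hdist : ∀ n p s, dist (Z n (p, s)) (Z (n + 1) (p, s)) ≤
      (2 * π / 2 / 2 ^ n) * Real.exp (2 * L * |s|) := by
    intro n
    induction n with
    | zero =>
      intro p s
      have h1 : dist (Z 0 (p, s)) (Z (0 + 1) (p, s)) ≤ π := by
        rw [dist_eq_norm]
        refine (AddCircle.norm_le_half_period (2 * π) (by positivity)).trans ?_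
        rw [abs_of_pos (by positivity)]
        linarith
      have h2 : 1 ≤ Real.exp (2 * L * |s|) := Real.one_le_exp (by positivity)
      have := mul_le_mul h1 h2 zero_le_one Real.pi_pos.le
      simpa using this
    | succ n ih =>
      intro p s
      rw [hZs (n + 1), hZs n] 
      rw [← hZs n]
      have := hlip (Z n) (Z (n + 1)) (hZm n) (hZm (n + 1)) _ (by positivity) ih p s
      rw [hZs n] at this ⊢
      convert this using 2
      rw [pow_succ]; field_simp
  have hdist' : ∀ (q : (ℝ × Ω) × ℝ) n, dist (Z n q) (Z (n + 1) q) ≤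
      (2 * π * Real.exp (2 * L * |q.2|)) / 2 / 2 ^ n := by
    intro q n
    refine (hdist n q.1 q.2).trans (le_of_eq ?_)
    ring
  have hlim : ∀ q, ∃ a, Tendsto (fun n => Z n q) atTop (𝓝 a) := fun q =>
    cauchySeq_tendsto_of_complete (cauchySeq_of_le_geometric_two (hdist' q))
  choose Θ hΘl using hlim
  have hΘm : Measurable Θ :=
    measurable_of_tendsto_metrizable hZm (tendsto_pi_nhds.2 hΘl)
  have hnear : ∀ n p s, dist (Z n (p, s)) (Θ (p, s)) ≤
      (2 * π / 2 ^ n) * Real.exp (2 * L * |s|) := by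
    intro n p s
    refine (dist_le_of_le_geometric_two_of_tendsto (hdist' (p, s)) (hΘl (p, s)) n).trans
      (le_of_eq ?_)
    ring
  have hfix : ∀ p s, Θ (p, s) = Φ Θ (p, s) := by
    intro p s
    refine tendsto_nhds_unique ((tendsto_add_atTop_iff_nat 1).2 (hΘl (p, s))) ?_
    rw [tendsto_iff_dist_tendsto_zero]
    have hz : Tendsto (fun n : ℕ => (2 * π / 2 ^ n) / 2 * Real.exp (2 * L * |s|)) atTop (𝓝 0) := by
      have h := (tendsto_pow_atTop_nhds_zero_of_lt_one (r := (1 / 2 : ℝ)) (by norm_num)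
        (by norm_num)).const_mul (π * Real.exp (2 * L * |s|))
      rw [mul_zero] at h
      refine h.congr fun n => ?_
      rw [one_div, inv_pow]
      field_simp
    refine squeeze_zero (fun n => dist_nonneg) (fun n => ?_) hz
    simp only [hZs]
    exact hlip (Z n) Θ (hZm n) hΘm _ (by positivity) (hnear n) p s
  have hbint := bdr_integrable P F hFm Γ hGm W hWm hW1 M hM MF hMF Θ hΘm
  refine ⟨fun x ω t => Θ ((x, ω), t), ?_, ?_, ?_⟩
  · exact measurable_pi_iff.2 fun t => hΘm.comp (measurable_id.prodMk measurable_const)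
  · intro x ω
    have hc : ContinuousOn (fun t => Φ Θ ((x, ω), t)) (Set.Icc 0 T) := by
      have hi : IntegrableOn (fun s => bdr P F Γ W Θ ((x, ω), s)) (Set.Icc 0 T) :=
        (hbint (x, ω) T).1.add (hbint (x, ω) T).2
      have h1 := intervalIntegral.continuousOn_primitive_Icc hi
      have h2 := h1.add (hBcc (x, ω)).continuousOn
      exact (continuousOn_const (c := θ0 x ω)).add ((AddCircle.continuous_mk' (2 * π)).comp_continuousOn h2)
    exact hc.congr fun t _ => hfix (x, ω) t
  · refine Eventually.of_forall fun x => Eventually.of_forall fun ω t ht => ?_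
    rw [hfix (x, ω) t]
    have hBt : Bc ((x, ω), t) = B x ω t := by
      simp only [Bc, min_eq_left ht.2, max_eq_right ht.1]
    have hdr : drift F Γ W (fun y s => pathLaw P (fun ω t => Θ ((y, ω), t)) s) x
        (fun t => Θ ((x, ω), t)) t = ∫ s in Set.Icc 0 t, bdr P F Γ W Θ ((x, ω), s) := by
      have hmap : ∀ (a : Torus) (y s : ℝ),
          ∫ u, Γ a u ∂(pathLaw P (fun ω t => Θ ((y, ω), t)) s) =
            ∫ ω', Γ a (Θ ((y, ω'), s)) ∂P := by
        intro a y s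
        have h1 : Measurable fun ω' => Θ ((y, ω'), s) := by fun_prop
        have h2 : Measurable (fun u => Γ a u) := hGm.comp (measurable_prodMk_left (x := a))
        exact integral_map h1.aemeasurable h2.aestronglyMeasurable
      simp only [drift, hmap]
      exact (integral_add (hbint (x, ω) t).1 (hbint (x, ω) t).2).symm
    rw [hdr, ← hBt]
    rfl
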